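/- arXiv:2207.04077 — 2 statements merged into one kernel-verified Lean document; each statement's English description precedes it below -/
import Mathlib

section
/- Let E be a real Banach space, T > 0, and S : ℝ → E →L[ℝ] E a strongly continuous semigroup on [0,T]: S 0 = 1, S (s+t) = S s ∘L S t for s,t ≥ 0 with s+t ≤ T, the map s ↦ S s x is continuous on [0,T] for every x ∈ E, and there is M with ‖S s‖ ≤ M for all s ∈ [0,T]. Let u₀ ∈ E, let u, N : [0,T] → E be continuous, and suppose that for every t ∈ [0,T] one has u(t) = S t u₀ + ∫₀^t S s (N(t−s)) ds. Then for every μ ∈ ℝ and every t ∈ [0,T] one has u(t) = e^{−μt}·S t u₀ + ∫₀^t e^{−μs} · S s (N(t−s) + μ·u(t−s)) ds. -/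
theorem continuousOn_apply_of_strong
    {E : Type*} [NormedAddCommGroup E] [NormedSpace ℝ E]
    (T : ℝ) (S : ℝ → E →L[ℝ] E)
    (hScont : ∀ x : E, ContinuousOn (fun s => S s x) (Set.Icc 0 T))
    (M : ℝ) (hM : ∀ s ∈ Set.Icc (0 : ℝ) T, ‖S s‖ ≤ M)
    (t : ℝ) (ht : t ≤ T) (g : ℝ → E) (hg : ContinuousOn g (Set.Icc 0 t)) :
    ContinuousOn (fun s => S s (g s)) (Set.Icc 0 t) := by
  have hsub : Set.Icc (0 : ℝ) t ⊆ Set.Icc 0 T := Set.Icc_subset_Icc_right ht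
  intro a ha
  have h1 : Filter.Tendsto (fun s => S s (g s - g a)) (nhdsWithin a (Set.Icc 0 t)) (nhds 0) := by
    have h2 : Filter.Tendsto (fun s => M * ‖g s - g a‖) (nhdsWithin a (Set.Icc 0 t)) (nhds 0) := by
      have h3 : Filter.Tendsto (fun s => g s - g a) (nhdsWithin a (Set.Icc 0 t)) (nhds (g a - g a)) :=
        (hg a ha).sub tendsto_const_nhds
      simpa using h3.norm.const_mul M
    refine squeeze_zero_norm' ?_ h2
    filter_upwards [self_mem_nhdsWithin] with s hs
    exact (S s).le_of_opNorm_le (hM s (hsub hs)) _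
  have h4 : Filter.Tendsto (fun s => S s (g a)) (nhdsWithin a (Set.Icc 0 t)) (nhds (S a (g a))) :=
    ((hScont (g a)).mono hsub) a ha
  have h5 := h1.add h4
  simp only [map_sub, sub_add_cancel, zero_add] at h5
  exact h5

/-- The 'add and subtract a linear term' procedure: a mild (Duhamel) solution
`u(t) = S_t u₀ + ∫₀ᵗ S_s N(t-s) ds` also satisfies, for every `μ`,
`u(t) = e^{-μt} S_t u₀ + ∫₀ᵗ e^{-μs} S_s (N(t-s) + μ u(t-s)) ds`. -/
theorem duhamel_add_subtract_linear_term
    {E : Type*} [NormedAddCommGroup E] [NormedSpace ℝ E] [CompleteSpace E]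
    (T : ℝ) (hT : 0 < T) (S : ℝ → E →L[ℝ] E)
    (hS0 : S 0 = 1)
    (hSadd : ∀ s t : ℝ, 0 ≤ s → 0 ≤ t → s + t ≤ T → S (s + t) = (S s).comp (S t))
    (hScont : ∀ x : E, ContinuousOn (fun s => S s x) (Set.Icc 0 T))
    (M : ℝ) (hM : ∀ s ∈ Set.Icc (0 : ℝ) T, ‖S s‖ ≤ M)
    (u₀ : E) (u N : ℝ → E)
    (hu : ContinuousOn u (Set.Icc 0 T)) (hN : ContinuousOn N (Set.Icc 0 T))
    (hrep : ∀ t ∈ Set.Icc (0 : ℝ) T,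
      u t = S t u₀ + ∫ s in (0 : ℝ)..t, S s (N (t - s))) :
    ∀ (μ : ℝ), ∀ t ∈ Set.Icc (0 : ℝ) T,
      u t = Real.exp (-(μ * t)) • S t u₀
        + ∫ s in (0 : ℝ)..t,
            Real.exp (-(μ * s)) • S s (N (t - s) + μ • u (t - s)) := by
  intro μ t ht
  obtain ⟨ht0, htT⟩ := ht
  set f : ℝ → E := fun s => S s (N (t - s)) with hf
  have hfc : ContinuousOn f (Set.Icc 0 t) := by
    apply continuousOn_apply_of_strong T S hScont M hM t htT
    refine hN.comp (by fun_prop) ?_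
    intro s hs
    exact ⟨by linarith [hs.2], by linarith [hs.1]⟩
  have hii : ∀ a ∈ Set.Icc (0 : ℝ) t, ∀ b ∈ Set.Icc (0 : ℝ) t,
      IntervalIntegrable f MeasureTheory.volume a b := by
    intro a ha b hb
    exact (hfc.mono (Set.uIcc_subset_Icc ha hb)).intervalIntegrable
  have h0 : (0 : ℝ) ∈ Set.Icc (0 : ℝ) t := ⟨le_rfl, ht0⟩
  have h1 : t ∈ Set.Icc (0 : ℝ) t := ⟨ht0, le_rfl⟩
  set H : ℝ → E := fun s => S t u₀ + ((∫ r in (0 : ℝ)..t, f r) - ∫ r in (0 : ℝ)..s, f r) with hH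
  have hSu : ∀ s ∈ Set.Icc (0 : ℝ) t, S s (u (t - s)) = H s := by
    intro s hs
    have hs0 := hs.1
    have hst := hs.2
    have hint : IntervalIntegrable (fun r => S r (N (t - s - r))) MeasureTheory.volume 0 (t - s) := by
      apply ContinuousOn.intervalIntegrable
      rw [Set.uIcc_of_le (by linarith)]
      apply continuousOn_apply_of_strong T S hScont M hM (t - s) (by linarith)
      refine hN.comp (by fun_prop) ?_
      intro r hr
      exact ⟨by linarith [hr.2], by linarith [hr.1]⟩
    rw [hrep (t - s) ⟨by linarith, by linarith⟩, map_add,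
      ← (S s).intervalIntegral_comp_comm hint]
    have e1 : S s (S (t - s) u₀) = S t u₀ := by
      have := hSadd s (t - s) hs0 (by linarith) (by linarith)
      rw [add_sub_cancel] at this
      rw [this]; rfl
    have e2 : ∫ r in (0 : ℝ)..(t - s), S s (S r (N (t - s - r))) = ∫ r in s..t, f r := by
      have e3 : ∫ r in (0 : ℝ)..(t - s), S s (S r (N (t - s - r)))
          = ∫ r in (0 : ℝ)..(t - s), f (s + r) := by
        apply intervalIntegral.integral_congr
        intro r hr
        rw [Set.uIcc_of_le (by linarith)] at hr
        have := hSadd s r hs0 hr.1 (by linarith [hr.2])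
        simp only [hf, this, ContinuousLinearMap.comp_apply, sub_sub]
      rw [e3, intervalIntegral.integral_comp_add_left]
      simp
    rw [e1, e2, hH]
    simp only
    rw [intervalIntegral.integral_interval_sub_left (hii 0 h0 t h1) (hii 0 h0 s hs)]
  have hHc : ContinuousOn H (Set.Icc 0 t) := by
    have := intervalIntegral.continuousOn_primitive_interval' (hii 0 h0 t h1) Set.left_mem_uIcc
    rw [Set.uIcc_of_le ht0] at this
    exact continuousOn_const.add (continuousOn_const.sub this)
  have hHd : ∀ s ∈ Set.Ioo (0 : ℝ) t, HasDerivAt H (-f s) s := by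
    intro s hs
    have hs' : s ∈ Set.Icc (0 : ℝ) t := ⟨hs.1.le, hs.2.le⟩
    have hd : HasDerivAt (fun s => ∫ r in (0 : ℝ)..s, f r) (f s) s := by
      apply intervalIntegral.integral_hasDerivAt_right (hii 0 h0 s hs')
      · exact (hfc.mono Set.Ioo_subset_Icc_self).stronglyMeasurableAtFilter isOpen_Ioo s hs
      · exact hfc.continuousAt (Icc_mem_nhds hs.1 hs.2)
    exact (hd.const_sub _).const_add _
  have hexp : ∀ s : ℝ, HasDerivAt (fun s => Real.exp (-(μ * s))) (-(μ * Real.exp (-(μ * s)))) s := by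
    intro s
    have := (((hasDerivAt_id s).const_mul μ).neg).exp
    refine HasDerivAt.congr_deriv this ?_
    simp only [Pi.neg_apply, id_eq]
    ring
  have hec : Continuous (fun s : ℝ => Real.exp (-(μ * s))) := by fun_prop
  have key := intervalIntegral.integral_eq_sub_of_hasDerivAt_of_le
    (f := fun s => -(Real.exp (-(μ * s)) • H s))
    (f' := fun s => Real.exp (-(μ * s)) • (f s + μ • H s)) ht0
    ((hec.continuousOn.smul hHc).neg)
    (by
      intro s hs
      have := ((hexp s).smul (hHd s hs)).neg
      refine HasDerivAt.congr_deriv this ?_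
      module)
    (by
      apply ContinuousOn.intervalIntegrable
      rw [Set.uIcc_of_le ht0]
      exact hec.continuousOn.smul (hfc.add (hHc.const_smul μ)))
  have hcongr : ∫ s in (0 : ℝ)..t, Real.exp (-(μ * s)) • S s (N (t - s) + μ • u (t - s))
      = ∫ s in (0 : ℝ)..t, Real.exp (-(μ * s)) • (f s + μ • H s) := by
    apply intervalIntegral.integral_congr
    intro s hs
    rw [Set.uIcc_of_le ht0] at hs
    simp only [map_add, map_smul, hSu s hs, hf]
  rw [hcongr, key]
  have hHt : H t = S t u₀ := by simp [hH]
  have hH0 : H 0 = u t := by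
    rw [← hSu 0 h0, hS0]; simp
  simp only [hHt, hH0]
  simp
end

section
/- Let E be a real Banach space, T > 0, and S : ℝ → E →L[ℝ] E a strongly continuous semigroup on [0,T]: S 0 = 1, S (s+t) = S s ∘L S t for s,t ≥ 0 with s+t ≤ T, the map s ↦ S s x is continuous on [0,T] for every x ∈ E, and there is M with ‖S s‖ ≤ M for all s ∈ [0,T]. Let λ ≥ 0 and let Ψ : [0,T] → E be continuous. Then for every t ∈ [0,T], ∫₀^t λ · ( ∫₀^{t−s} λ e^{−λ s'} · S (s+s') (Ψ(t−s−s')) ds' ) ds = ∫₀^t λ·(1 − e^{−λu}) · S u (Ψ(t−u)) du. -/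
/-- The double-integral collapse (change of variables `u = s + s'` plus the
semigroup property) used in the derivation of the Markov identity (MF4)-(MF6):
`∫₀ᵗ λ (∫₀^{t-s} λ e^{-λs'} S_{s+s'} Ψ(t-s-s') ds') ds
  = ∫₀ᵗ λ (1 - e^{-λu}) S_u Ψ(t-u) du`. -/
theorem double_integral_collapse
    {E : Type*} [NormedAddCommGroup E] [NormedSpace ℝ E] [CompleteSpace E]
    (T : ℝ) (hT : 0 < T) (S : ℝ → E →L[ℝ] E)
    (hS0 : S 0 = 1)
    (hSadd : ∀ s t : ℝ, 0 ≤ s → 0 ≤ t → s + t ≤ T → S (s + t) = (S s).comp (S t))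
    (hScont : ∀ x : E, ContinuousOn (fun s => S s x) (Set.Icc 0 T))
    (M : ℝ) (hM : ∀ s ∈ Set.Icc (0 : ℝ) T, ‖S s‖ ≤ M)
    (lam : ℝ) (hlam : 0 ≤ lam) (Ψ : ℝ → E) (hΨ : ContinuousOn Ψ (Set.Icc 0 T)) :
    ∀ t ∈ Set.Icc (0 : ℝ) T,
      (∫ s in (0 : ℝ)..t,
        lam • ∫ s' in (0 : ℝ)..(t - s),
          (lam * Real.exp (-(lam * s'))) • S (s + s') (Ψ (t - s - s')))
      = ∫ u in (0 : ℝ)..t,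
          (lam * (1 - Real.exp (-(lam * u)))) • S u (Ψ (t - u)) := by
  intro t ht
  obtain ⟨ht0, htT⟩ := ht
  have hsub : ∀ u ∈ Set.Icc (0:ℝ) t, u ∈ Set.Icc (0:ℝ) T :=
    fun u hu => ⟨hu.1, hu.2.trans htT⟩
  have hmap : Set.MapsTo (fun u : ℝ => t - u) (Set.Icc 0 t) (Set.Icc 0 T) :=
    fun u hu => ⟨by linarith [hu.2], by linarith [hu.1]⟩
  have hΨ' : ContinuousOn (fun u => Ψ (t - u)) (Set.Icc 0 t) :=
    hΨ.comp (by fun_prop) hmap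
  have hF : ContinuousOn (fun u => S u (Ψ (t - u))) (Set.Icc 0 t) := by
    intro u0 hu0
    have h1 : Filter.Tendsto (fun u => S u (Ψ (t - u0))) (nhdsWithin u0 (Set.Icc 0 t))
        (nhds (S u0 (Ψ (t - u0)))) :=
      ((hScont (Ψ (t - u0))).mono hsub) u0 hu0
    have h2 : Filter.Tendsto (fun u => S u (Ψ (t - u) - Ψ (t - u0)))
        (nhdsWithin u0 (Set.Icc 0 t)) (nhds 0) := by
      have h3 : Filter.Tendsto (fun u => M * ‖Ψ (t - u) - Ψ (t - u0)‖)
          (nhdsWithin u0 (Set.Icc 0 t)) (nhds 0) := by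
        have h4 : Filter.Tendsto (fun u => Ψ (t - u)) (nhdsWithin u0 (Set.Icc 0 t))
          (nhds (Ψ (t - u0))) := hΨ' u0 hu0
        simpa using ((h4.sub_const (Ψ (t - u0))).norm).const_mul M
      refine squeeze_zero_norm' ?_ h3
      filter_upwards [self_mem_nhdsWithin] with u hu
      exact (S u).le_of_opNorm_le (hM u (hsub u hu)) _
    have h5 := h2.add h1
    simpa [ContinuousWithinAt] using h5
  obtain ⟨G, hG, hGF⟩ : ∃ G : ℝ → E, Continuous G ∧
      ∀ u ∈ Set.Icc (0:ℝ) t, G u = S u (Ψ (t - u)) :=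
    ⟨Set.IccExtend ht0 ((Set.Icc 0 t).domRestrict (fun u => S u (Ψ (t - u)))),
      (continuousOn_iff_continuous_domRestrict.1 hF).Icc_extend',
      fun u hu => Set.IccExtend_of_mem ht0 _ hu⟩
  set K : ℝ → E := fun u => (lam * Real.exp (-(lam * u))) • G u with hK
  have hKc : Continuous K := by fun_prop
  set H : ℝ → E := fun s => ∫ u in t..s, K u with hH
  have hHd : ∀ s, HasDerivAt H (K s) s := fun s =>
    intervalIntegral.integral_hasDerivAt_right (hKc.intervalIntegrable _ _)
      hKc.aestronglyMeasurable.stronglyMeasurableAtFilter hKc.continuousAt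
  have hHc : Continuous H := continuous_iff_continuousAt.2 fun s => (hHd s).continuousAt
  have inner : ∀ s ∈ Set.Icc (0:ℝ) t,
      (∫ s' in (0 : ℝ)..(t - s),
          (lam * Real.exp (-(lam * s'))) • S (s + s') (Ψ (t - s - s')))
        = -(Real.exp (lam * s) • H s) := by
    intro s hs
    have e1 : (∫ s' in (0 : ℝ)..(t - s),
          (lam * Real.exp (-(lam * s'))) • S (s + s') (Ψ (t - s - s')))
        = ∫ s' in (0 : ℝ)..(t - s), Real.exp (lam * s) • K (s + s') := by
      apply intervalIntegral.integral_congr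
      intro r hr
      rw [Set.uIcc_of_le (by linarith [hs.2])] at hr
      simp only [hK]
      rw [hGF (s + r) ⟨by linarith [hs.1, hr.1], by linarith [hr.2]⟩, smul_smul, sub_sub]
      congr 1
      rw [mul_left_comm, ← Real.exp_add]
      ring_nf
    rw [e1, intervalIntegral.integral_smul, intervalIntegral.integral_comp_add_left K s]
    simp only [hH]
    rw [intervalIntegral.integral_symm s t, smul_neg, neg_neg]
    simp
  have hP : ∀ s, HasDerivAt (fun s => Real.exp (lam * s) • H s)
      (lam • G s + lam • (Real.exp (lam * s) • H s)) s := by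
    intro s
    have he : HasDerivAt (fun s => Real.exp (lam * s)) (Real.exp (lam * s) * lam) s := by
      simpa using ((hasDerivAt_id s).const_mul lam).exp
    have := he.smul (hHd s)
    refine HasDerivAt.congr_deriv (f := fun s => Real.exp (lam * s) • H s) this ?_
    symm
    simp only [hK, smul_smul]
    rw [mul_left_comm, ← Real.exp_add, mul_comm lam (Real.exp _)]
    simp
  have hcE : Continuous (fun s => lam • (Real.exp (lam * s) • H s)) := by fun_prop
  have hcG : Continuous (fun s => lam • G s) := by fun_prop
  have key := intervalIntegral.integral_eq_sub_of_hasDerivAt (a := 0) (b := t)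
    (fun s _ => hP s) ((hcG.add hcE).intervalIntegrable _ _)
  rw [intervalIntegral.integral_add (hcG.intervalIntegrable _ _)
    (hcE.intervalIntegrable _ _)] at key
  have hHt : H t = 0 := by simp [hH]
  have hH0 : H 0 = -∫ u in (0:ℝ)..t, K u := by
    simp only [hH]; rw [intervalIntegral.integral_symm]
  simp only [hHt, hH0, smul_zero, mul_zero, Real.exp_zero, one_smul, zero_sub, neg_neg] at key
  have eL : (∫ s in (0 : ℝ)..t,
        lam • ∫ s' in (0 : ℝ)..(t - s),
          (lam * Real.exp (-(lam * s'))) • S (s + s') (Ψ (t - s - s')))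
      = -∫ s in (0 : ℝ)..t, lam • (Real.exp (lam * s) • H s) := by
    rw [← intervalIntegral.integral_neg]
    apply intervalIntegral.integral_congr
    intro s hs
    rw [Set.uIcc_of_le ht0] at hs
    simp only []
    rw [inner s hs, smul_neg]
  have eR : (∫ u in (0 : ℝ)..t,
          (lam * (1 - Real.exp (-(lam * u)))) • S u (Ψ (t - u)))
      = (∫ u in (0:ℝ)..t, lam • G u) - ∫ u in (0:ℝ)..t, K u := by
    rw [← intervalIntegral.integral_sub (hcG.intervalIntegrable _ _)
      (hKc.intervalIntegrable _ _)]
    apply intervalIntegral.integral_congr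
    intro s hs
    rw [Set.uIcc_of_le ht0] at hs
    simp only [hK]
    rw [hGF s hs, ← sub_smul, mul_sub, mul_one]
  rw [eL, eR, ← key]
  abel
end
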